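/- Suppose H_A = C^d, Alice's measurement is the full Bell state measurement {M_a = (U_a ⊗ 1)Φ+(U_a† ⊗ 1)}_{a=0}^{d²−1} on V ⊗ A, and the input set {ω_x} is tomographically complete. Then the optimal value ν of the negativity-estimation optimization (minimize Σ_a tr[σ⁻_{a|ω_x}] over M*_{a,±} ≥ 0 on V ⊗ H_B and Hermitian ρ_± on H_B with σ_{a|ω_x} = tr_V[M*_{a,+}(ω_x ⊗ 1_B)] − tr_V[M*_{a,−}(ω_x ⊗ 1_B)] for all a, x and Σ_a M*_{a,±} = 1_V ⊗ ρ_±) equals the entanglement negativity: ν = N(ρ^{AB}). -/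

import Mathlib

open Matrix ComplexOrder
open scoped Kronecker

namespace Tele

noncomputable def ptrace₁ {V B : Type*} [Fintype V]
    (M : Matrix (V × B) (V × B) ℂ) : Matrix B B ℂ :=
  Matrix.of fun b b' => ∑ v, M (v, b) (v, b')

noncomputable def ptrace₂ {V B : Type*} [Fintype B]
    (M : Matrix (V × B) (V × B) ℂ) : Matrix V V ℂ :=
  Matrix.of fun v v' => ∑ b, M (v, b) (v', b)

noncomputable def ptraceMid {V A B : Type*} [Fintype A]
    (M : Matrix (V × A × B) (V × A × B) ℂ) : Matrix (V × B) (V × B) ℂ :=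
  Matrix.of fun p q => ∑ a, M (p.1, a, p.2) (q.1, a, q.2)

noncomputable def ptraceVA {V A B : Type*} [Fintype V] [Fintype A]
    (M : Matrix (V × A × B) (V × A × B) ℂ) : Matrix B B ℂ :=
  Matrix.of fun b b' => ∑ v, ∑ a, M (v, a, b) (v, a, b')

noncomputable def ptraceV₁A {V V₁ A B : Type*} [Fintype V₁] [Fintype A]
    (M : Matrix (V × V₁ × A × B) (V × V₁ × A × B) ℂ) : Matrix (V × B) (V × B) ℂ :=
  Matrix.of fun p q => ∑ v₁, ∑ a, M (p.1, v₁, a, p.2) (q.1, v₁, a, q.2)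

def ptranspose₁ {V B : Type*} (M : Matrix (V × B) (V × B) ℂ) : Matrix (V × B) (V × B) ℂ :=
  Matrix.of fun p q => M (q.1, p.2) (p.1, q.2)

def ptranspose₂ {V B : Type*} (M : Matrix (V × B) (V × B) ℂ) : Matrix (V × B) (V × B) ℂ :=
  Matrix.of fun p q => M (p.1, q.2) (q.1, p.2)

def Separable {V B : Type*} [Fintype V] [Fintype B]
    (M : Matrix (V × B) (V × B) ℂ) : Prop :=
  ∃ (n : ℕ) (τ : Fin n → Matrix V V ℂ) (χ : Fin n → Matrix B B ℂ),
    (∀ i, (τ i).PosSemidef) ∧ (∀ i, (χ i).PosSemidef) ∧ M = ∑ i, τ i ⊗ₖ χ i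

def IsState {V : Type*} [Fintype V] (ρ : Matrix V V ℂ) : Prop :=
  ρ.PosSemidef ∧ ρ.trace = 1

noncomputable def maxEnt (d : ℕ) : Matrix (Fin d × Fin d) (Fin d × Fin d) ℂ :=
  Matrix.of fun p q => if p.1 = p.2 ∧ q.1 = q.2 then (d : ℂ)⁻¹ else 0

noncomputable def chanOp {V A B : Type*} [Fintype V] [Fintype A] [Fintype B]
    [DecidableEq V] [DecidableEq B]
    (M : Matrix (V × A) (V × A) ℂ) (ρ : Matrix (A × B) (A × B) ℂ) :
    Matrix (V × B) (V × B) ℂ :=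
  ptraceMid ((Matrix.reindex (Equiv.prodAssoc V A B) (Equiv.prodAssoc V A B)
      (M ⊗ₖ (1 : Matrix B B ℂ))) * ((1 : Matrix V V ℂ) ⊗ₖ ρ))

noncomputable def teleA {V A B : Type*} [Fintype V] [Fintype A] [Fintype B] [DecidableEq B]
    (M : Matrix (V × A) (V × A) ℂ) (ρ : Matrix (A × B) (A × B) ℂ) (ω : Matrix V V ℂ) :
    Matrix B B ℂ :=
  ptraceVA ((Matrix.reindex (Equiv.prodAssoc V A B) (Equiv.prodAssoc V A B)
      (M ⊗ₖ (1 : Matrix B B ℂ))) * (ω ⊗ₖ ρ))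

noncomputable def margOp {V A : Type*} [Fintype V] [Fintype A] [DecidableEq V]
    (M : Matrix (V × A) (V × A) ℂ) (ρA : Matrix A A ℂ) : Matrix V V ℂ :=
  ptrace₂ (M * ((1 : Matrix V V ℂ) ⊗ₖ ρA))

noncomputable def piOp {A B : Type*} [Fintype A] [Fintype B] [DecidableEq B]
    (χ : Matrix A A ℂ) (ρ : Matrix (A × B) (A × B) ℂ) : Matrix B B ℂ :=
  ptrace₁ ((χ ⊗ₖ (1 : Matrix B B ℂ)) * ρ)

def TomoComplete {V X : Type*} [Fintype V] (ω : X → Matrix V V ℂ) : Prop :=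
  ∀ H : Matrix V V ℂ, H.IsHermitian → H ∈ Submodule.span ℝ (Set.range ω)

noncomputable def shiftX (d : ℕ) : Matrix (Fin d) (Fin d) ℂ :=
  Matrix.of fun i j => if (i : ℕ) = ((j : ℕ) + 1) % d then 1 else 0

noncomputable def clockZ (d : ℕ) : Matrix (Fin d) (Fin d) ℂ :=
  Matrix.of fun i j =>
    if i = j then Complex.exp (2 * (Real.pi : ℂ) * Complex.I * ((i : ℕ) : ℂ) / (d : ℂ)) else 0

noncomputable def HW (d : ℕ) (a : Fin d × Fin d) : Matrix (Fin d) (Fin d) ℂ :=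
  shiftX d ^ (a.1 : ℕ) * clockZ d ^ (a.2 : ℕ)

noncomputable def bellPOVM (d : ℕ) (a : Fin d × Fin d) :
    Matrix (Fin d × Fin d) (Fin d × Fin d) ℂ :=
  (HW d a ⊗ₖ (1 : Matrix (Fin d) (Fin d) ℂ)) * maxEnt d *
    ((HW d a)ᴴ ⊗ₖ (1 : Matrix (Fin d) (Fin d) ℂ))

noncomputable def negativity {A B : Type*} [Fintype A] [Fintype B]
    (ρ : Matrix (A × B) (A × B) ℂ) : ℝ :=
  sInf {t : ℝ | ∃ ρp ρm : Matrix (A × B) (A × B) ℂ,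
    ρ = ρp - ρm ∧ (ptranspose₁ ρp).PosSemidef ∧ (ptranspose₁ ρm).PosSemidef ∧
    t = (ρm.trace).re}

noncomputable def epsGen {A B : Type*} [Fintype A] [Fintype B]
    (ρ : Matrix (A × B) (A × B) ℂ) : ℝ :=
  sInf {r : ℝ | 0 ≤ r ∧ ∃ ρs : Matrix (A × B) (A × B) ℂ, IsState ρs ∧
    Separable ((((1 + r : ℝ) : ℂ))⁻¹ • (ρ + ((r : ℝ) : ℂ) • ρs))}

noncomputable def epsSep {A B : Type*} [Fintype A] [Fintype B]
    (ρ : Matrix (A × B) (A × B) ℂ) : ℝ :=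
  sInf {r : ℝ | 0 ≤ r ∧ ∃ ρs : Matrix (A × B) (A × B) ℂ, IsState ρs ∧ Separable ρs ∧
    Separable ((((1 + r : ℝ) : ℂ))⁻¹ • (ρ + ((r : ℝ) : ℂ) • ρs))}

noncomputable def epsR {A B : Type*} [Fintype A] [Fintype B] [DecidableEq A] [DecidableEq B]
    (ρ : Matrix (A × B) (A × B) ℂ) : ℝ :=
  sInf {r : ℝ | 0 ≤ r ∧
    Separable ((((1 + r : ℝ) : ℂ))⁻¹ •
      (ρ + ((r : ℝ) : ℂ) • ((Fintype.card (A × B) : ℂ)⁻¹ • (1 : Matrix (A × B) (A × B) ℂ))))}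

noncomputable def epsBSA {A B : Type*} [Fintype A] [Fintype B]
    (ρ : Matrix (A × B) (A × B) ℂ) : ℝ :=
  sInf {p : ℝ | 0 ≤ p ∧ p ≤ 1 ∧ ∃ ρs σS : Matrix (A × B) (A × B) ℂ,
    IsState ρs ∧ IsState σS ∧ Separable σS ∧
    ρ = ((p : ℝ) : ℂ) • ρs + (((1 - p : ℝ)) : ℂ) • σS}

noncomputable def tauGen {V B X ι : Type*} [Fintype V] [Fintype B] [Fintype ι]
    [DecidableEq V] [DecidableEq B]
    (ω : X → Matrix V V ℂ) (σ : ι → X → Matrix B B ℂ) : ℝ :=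
  sInf {r : ℝ | 0 ≤ r ∧ ∃ (m : ℕ) (ρs : Matrix (Fin m × B) (Fin m × B) ℂ)
      (N : ι → Matrix (V × Fin m) (V × Fin m) ℂ) (Ms : ι → Matrix (V × B) (V × B) ℂ),
      IsState ρs ∧ (∀ a, (N a).PosSemidef) ∧ ((∑ a, N a) = 1) ∧
      (∀ a, (Ms a).PosSemidef ∧ Separable (Ms a)) ∧
      (∀ a x, (((1 + r : ℝ) : ℂ))⁻¹ • (σ a x + ((r : ℝ) : ℂ) • teleA (N a) ρs (ω x)) =
        ptrace₁ (Ms a * (ω x ⊗ₖ (1 : Matrix B B ℂ)))) ∧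
      (∀ x, (∑ a, Ms a) = (1 : Matrix V V ℂ) ⊗ₖ
        ((((1 + r : ℝ) : ℂ))⁻¹ •
          ((∑ a, σ a x) + ((r : ℝ) : ℂ) • ∑ a, teleA (N a) ρs (ω x))))}

noncomputable def tauCl {V B X ι : Type*} [Fintype V] [Fintype B] [Fintype ι]
    [DecidableEq V] [DecidableEq B]
    (ω : X → Matrix V V ℂ) (σ : ι → X → Matrix B B ℂ) : ℝ :=
  sInf {r : ℝ | 0 ≤ r ∧ ∃ (Mb Ms : ι → Matrix (V × B) (V × B) ℂ),
    (∀ a, (Mb a).PosSemidef ∧ Separable (Mb a)) ∧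
    (∀ a, (Ms a).PosSemidef ∧ Separable (Ms a)) ∧
    (∀ x, (∑ a, Mb a) = (1 : Matrix V V ℂ) ⊗ₖ
      (∑ a, ptrace₁ (Mb a * (ω x ⊗ₖ (1 : Matrix B B ℂ))))) ∧
    (∀ a x, (((1 + r : ℝ) : ℂ))⁻¹ •
        (σ a x + ((r : ℝ) : ℂ) • ptrace₁ (Mb a * (ω x ⊗ₖ (1 : Matrix B B ℂ)))) =
      ptrace₁ (Ms a * (ω x ⊗ₖ (1 : Matrix B B ℂ)))) ∧
    (∀ x, (∑ a, Ms a) = (1 : Matrix V V ℂ) ⊗ₖ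
      ((((1 + r : ℝ) : ℂ))⁻¹ •
        ((∑ a, σ a x) + ((r : ℝ) : ℂ) •
          ∑ a, ptrace₁ (Mb a * (ω x ⊗ₖ (1 : Matrix B B ℂ))))))}

noncomputable def tauR {V B X ι : Type*} [Fintype V] [Fintype B] [Fintype ι]
    [DecidableEq V] [DecidableEq B]
    (ω : X → Matrix V V ℂ) (σ : ι → X → Matrix B B ℂ) : ℝ :=
  sInf {r : ℝ | 0 ≤ r ∧ ∃ (p : ι → ℝ) (Ms : ι → Matrix (V × B) (V × B) ℂ),
    (∀ a, 0 ≤ p a) ∧ ((∑ a, p a) = 1) ∧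
    (∀ a, (Ms a).PosSemidef ∧ Separable (Ms a)) ∧
    (∀ a x, (((1 + r : ℝ) : ℂ))⁻¹ •
        (σ a x + ((r * p a : ℝ) : ℂ) • ((Fintype.card B : ℂ)⁻¹ • (1 : Matrix B B ℂ))) =
      ptrace₁ (Ms a * (ω x ⊗ₖ (1 : Matrix B B ℂ)))) ∧
    (∀ x, (∑ a, Ms a) = (1 : Matrix V V ℂ) ⊗ₖ
      ((((1 + r : ℝ) : ℂ))⁻¹ •
        ((∑ a, σ a x) + ((r : ℝ) : ℂ) • ((Fintype.card B : ℂ)⁻¹ • (1 : Matrix B B ℂ)))))}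

noncomputable def TW {V B X ι : Type*} [Fintype V] [Fintype B] [Fintype ι]
    [DecidableEq B]
    (ω : X → Matrix V V ℂ) (σ : ι → X → Matrix B B ℂ) : ℝ :=
  sInf {p : ℝ | 0 ≤ p ∧ p ≤ 1 ∧ ∃ (Mt Mb : ι → Matrix (V × B) (V × B) ℂ),
    (∀ a, (Mb a).PosSemidef ∧ Separable (Mb a)) ∧
    (∀ a, (ptranspose₁ (Mt a)).PosSemidef) ∧
    (∀ x x', (∑ a, ptrace₁ (Mt a * (ω x ⊗ₖ (1 : Matrix B B ℂ)))) =
      ∑ a, ptrace₁ (Mt a * (ω x' ⊗ₖ (1 : Matrix B B ℂ)))) ∧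
    (∀ a x, σ a x = ptrace₁
      ((((p : ℝ) : ℂ) • Mt a + (((1 - p : ℝ)) : ℂ) • Mb a) * (ω x ⊗ₖ (1 : Matrix B B ℂ))))}

/-!
For any measurement `M`, the teleportation instrument is represented by the operators
`chanOp (M a) ρ`, and this representation sends operators with positive partial transpose to
positive ones. Applying it to both parts of a decomposition `ρ = ρ₊ - ρ₋` gives a feasible point
with the same objective value. For a Bell measurement the operators are
`d⁻¹ (U_a ⊗ 1) ρ^{T_A} (U_a ⊗ 1)†`, so undoing the unitaries and summing over `a` with weight
`d⁻¹` recovers `ρ^{T_A}`. Tomographic completeness forces `M*_{a,+} - M*_{a,-}` to be exactly these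
operators, and the same sum therefore turns a feasible point back into a decomposition of `ρ`.
-/

section PartialTrace

variable {V B : Type*}

lemma ptrace₁_sub [Fintype V] (M N : Matrix (V × B) (V × B) ℂ) :
    ptrace₁ (M - N) = ptrace₁ M - ptrace₁ N := by
  ext b b'
  simp [ptrace₁]

lemma trace_ptrace₁ [Fintype V] [Fintype B] (M : Matrix (V × B) (V × B) ℂ) :
    (ptrace₁ M).trace = M.trace := by
  simp only [trace, diag, ptrace₁, of_apply, Fintype.sum_prod_type]
  exact Finset.sum_comm

lemma isHermitian_ptrace₁ [Fintype V] {M : Matrix (V × B) (V × B) ℂ} (hM : M.IsHermitian) :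
    (ptrace₁ M).IsHermitian := by
  ext b b'
  simp only [ptrace₁, conjTranspose_apply, of_apply, star_sum, hM.apply]

lemma ptranspose₁_ptranspose₁ (M : Matrix (V × B) (V × B) ℂ) :
    ptranspose₁ (ptranspose₁ M) = M := rfl

lemma ptranspose₁_sub (M N : Matrix (V × B) (V × B) ℂ) :
    ptranspose₁ (M - N) = ptranspose₁ M - ptranspose₁ N := rfl

lemma ptrace₁_ptranspose₁ [Fintype V] (M : Matrix (V × B) (V × B) ℂ) :
    ptrace₁ (ptranspose₁ M) = ptrace₁ M := rfl

lemma trace_ptranspose₁ [Fintype V] [Fintype B] (M : Matrix (V × B) (V × B) ℂ) :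
    (ptranspose₁ M).trace = M.trace := rfl

end PartialTrace

section ChannelOperator

variable {V A B : Type*} [Fintype V] [Fintype A] [Fintype B] [DecidableEq V] [DecidableEq B]

lemma chanOp_apply (M : Matrix (V × A) (V × A) ℂ) (ρ : Matrix (A × B) (A × B) ℂ)
    (v v' : V) (b b' : B) :
    chanOp M ρ (v, b) (v', b') = ∑ a, ∑ a', M (v, a) (v', a') * ρ (a', b) (a, b') := by
  simp [chanOp, ptraceMid, mul_apply, one_apply, Fintype.sum_prod_type]

lemma teleA_eq_ptrace₁_chanOp (M : Matrix (V × A) (V × A) ℂ) (ρ : Matrix (A × B) (A × B) ℂ)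
    (ω : Matrix V V ℂ) :
    teleA M ρ ω = ptrace₁ (chanOp M ρ * (ω ⊗ₖ (1 : Matrix B B ℂ))) := by
  ext b b'
  simp only [teleA, ptraceVA, ptrace₁, of_apply, mul_apply, Fintype.sum_prod_type, chanOp_apply,
    reindex_apply, submatrix_apply, Equiv.prodAssoc_symm_apply, kroneckerMap_apply, one_apply,
    mul_ite, ite_mul, mul_one, mul_zero, zero_mul, Finset.sum_ite_eq, Finset.sum_ite_eq',
    Finset.mem_univ, if_true, Finset.sum_mul]
  refine Finset.sum_congr rfl fun v _ => ?_
  rw [Finset.sum_comm]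
  refine Finset.sum_congr rfl fun v' _ => Finset.sum_congr rfl fun a _ =>
    Finset.sum_congr rfl fun a' _ => ?_
  ring

lemma chanOp_sub (M : Matrix (V × A) (V × A) ℂ) (ρ σ : Matrix (A × B) (A × B) ℂ) :
    chanOp M (ρ - σ) = chanOp M ρ - chanOp M σ := by
  ext ⟨v, b⟩ ⟨v', b'⟩
  simp [chanOp_apply, mul_sub]

lemma sum_chanOp {ι : Type*} [Fintype ι] (M : ι → Matrix (V × A) (V × A) ℂ)
    (ρ : Matrix (A × B) (A × B) ℂ) : ∑ i, chanOp (M i) ρ = chanOp (∑ i, M i) ρ := by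
  ext ⟨v, b⟩ ⟨v', b'⟩
  simp only [Matrix.sum_apply, chanOp_apply, Finset.sum_mul]
  rw [Finset.sum_comm]
  exact Finset.sum_congr rfl fun a _ => Finset.sum_comm

lemma chanOp_one [DecidableEq A] (ρ : Matrix (A × B) (A × B) ℂ) :
    chanOp 1 ρ = (1 : Matrix V V ℂ) ⊗ₖ ptrace₁ ρ := by
  ext ⟨v, b⟩ ⟨v', b'⟩
  by_cases h : v = v' <;> simp [chanOp_apply, one_apply, ptrace₁, h]

-- Contracting the two copies of `A` in `M ⊗ ρ^{T_A}` is a congruence by a 0-1 matrix `C`.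
lemma posSemidef_chanOp {M : Matrix (V × A) (V × A) ℂ}
    {ρ : Matrix (A × B) (A × B) ℂ} (hM : M.PosSemidef) (hρ : (ptranspose₁ ρ).PosSemidef) :
    (chanOp M ρ).PosSemidef := by
  classical
  let C : Matrix ((V × A) × (A × B)) (V × B) ℂ := of fun p q =>
    if p.1.1 = q.1 ∧ p.1.2 = p.2.1 ∧ p.2.2 = q.2 then 1 else 0
  have hC : chanOp M ρ = Cᴴ * (M ⊗ₖ ptranspose₁ ρ) * C := by
    ext ⟨v, b⟩ ⟨v', b'⟩
    simp only [chanOp_apply, C, ptranspose₁, mul_apply, conjTranspose_apply, of_apply,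
      kroneckerMap_apply, Fintype.sum_prod_type, ite_and, apply_ite star, star_one, star_zero,
      ite_mul, mul_ite, one_mul, zero_mul, mul_one, mul_zero, Finset.sum_ite_irrel,
      Finset.sum_const_zero, Finset.sum_ite_eq, Finset.sum_ite_eq', Finset.mem_univ, if_true]
    exact Finset.sum_comm
  rw [hC]
  exact (hM.kronecker hρ).conjTranspose_mul_mul_same C

end ChannelOperator

section TomographicCompleteness

variable {V B X : Type*} [Fintype V] [Fintype B] [DecidableEq B]

lemma TomoComplete.span_complex_eq_top {ω : X → Matrix V V ℂ} (hω : TomoComplete ω) :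
    Submodule.span ℂ (Set.range ω) = ⊤ := by
  have hherm (H : Matrix V V ℂ) (hH : IsSelfAdjoint H) : H ∈ Submodule.span ℂ (Set.range ω) :=
    Submodule.span_le_restrictScalars ℝ ℂ _ (hω H hH)
  refine Submodule.eq_top_iff'.mpr fun E => ?_
  rw [← realPart_add_I_smul_imaginaryPart E]
  exact add_mem (hherm _ (realPart E).2) (Submodule.smul_mem _ _ (hherm _ (imaginaryPart E).2))

/-- The linear map `ω ↦ tr_V[D (ω ⊗ 1)]` represented by an operator `D` on `V ⊗ B`. -/
noncomputable def operatorMap (D : Matrix (V × B) (V × B) ℂ) :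
    Matrix V V ℂ →ₗ[ℂ] Matrix B B ℂ where
  toFun ω := ptrace₁ (D * (ω ⊗ₖ (1 : Matrix B B ℂ)))
  map_add' ω η := by
    ext b b'
    simp [ptrace₁, add_kronecker, Matrix.mul_add, Finset.sum_add_distrib]
  map_smul' c ω := by
    ext b b'
    simp [ptrace₁, smul_kronecker, Finset.mul_sum]

lemma operatorMap_single_apply [DecidableEq V] (D : Matrix (V × B) (V × B) ℂ) (v v' : V)
    (b b' : B) : operatorMap D (single v' v 1) b b' = D (v, b) (v', b') := by
  simp [operatorMap, ptrace₁, mul_apply, Fintype.sum_prod_type, single_apply, one_apply, ite_and]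

lemma operatorMap_injective :
    Function.Injective (operatorMap : Matrix (V × B) (V × B) ℂ → _) := by
  classical
  intro D E h
  ext ⟨v, b⟩ ⟨v', b'⟩
  rw [← operatorMap_single_apply D, h, operatorMap_single_apply]

lemma eq_of_ptrace₁_mul_kronecker_eq {ω : X → Matrix V V ℂ}
    (hω : Submodule.span ℂ (Set.range ω) = ⊤) {D E : Matrix (V × B) (V × B) ℂ}
    (h : ∀ x, ptrace₁ (D * (ω x ⊗ₖ (1 : Matrix B B ℂ))) =
      ptrace₁ (E * (ω x ⊗ₖ (1 : Matrix B B ℂ)))) : D = E :=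
  operatorMap_injective (LinearMap.ext_on_range hω h)

end TomographicCompleteness

section UnitaryErrorBasis

variable {ι V B : Type*} [Fintype ι] [Fintype V] [Fintype B] [DecidableEq B]

/-- The Bell projector `(U ⊗ 1) Φ⁺ (U† ⊗ 1)`, written out as the rank-one operator of the
vectorisation of `U`. -/
noncomputable def bellProj (U : Matrix V V ℂ) : Matrix (V × V) (V × V) ℂ :=
  (Fintype.card V : ℂ)⁻¹ • vecMulVec (fun p => U p.1 p.2) (star fun p => U p.1 p.2)

lemma bellProj_apply (U : Matrix V V ℂ) (v i v' j : V) :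
    bellProj U (v, i) (v', j) = (Fintype.card V : ℂ)⁻¹ * (U v i * star (U v' j)) := rfl

lemma posSemidef_bellProj (U : Matrix V V ℂ) : (bellProj U).PosSemidef :=
  (posSemidef_vecMulVec_self_star _).smul (by positivity)

/-- The operator obtained by undoing each `U a` on the `a`-th operator and summing with weight
`1 / dim ℂ^V`. It inverts the passage from `ρ^{T_A}` to the channel operators of the Bell
measurement of `U`. -/
noncomputable def bellDecode (U : ι → Matrix V V ℂ) (N : ι → Matrix (V × B) (V × B) ℂ) :
    Matrix (V × B) (V × B) ℂ :=
  (Fintype.card V : ℂ)⁻¹ • ∑ a, (U a ⊗ₖ (1 : Matrix B B ℂ))ᴴ * N a * (U a ⊗ₖ (1 : Matrix B B ℂ))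

lemma bellDecode_sub (U : ι → Matrix V V ℂ) (N N' : ι → Matrix (V × B) (V × B) ℂ) :
    bellDecode U (N - N') = bellDecode U N - bellDecode U N' := by
  simp [bellDecode, Matrix.mul_sub, Matrix.sub_mul, smul_sub]

lemma posSemidef_bellDecode (U : ι → Matrix V V ℂ) {N : ι → Matrix (V × B) (V × B) ℂ}
    (hN : ∀ a, (N a).PosSemidef) : (bellDecode U N).PosSemidef :=
  (posSemidef_sum _ fun a _ => (hN a).conjTranspose_mul_mul_same _).smul (by positivity)

variable [DecidableEq V]

lemma chanOp_bellProj (U : Matrix V V ℂ) (ρ : Matrix (V × B) (V × B) ℂ) :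
    chanOp (bellProj U) ρ = (Fintype.card V : ℂ)⁻¹ •
      ((U ⊗ₖ (1 : Matrix B B ℂ)) * ptranspose₁ ρ * (U ⊗ₖ (1 : Matrix B B ℂ))ᴴ) := by
  ext ⟨v, b⟩ ⟨v', b'⟩
  simp only [chanOp_apply, bellProj_apply, Matrix.smul_apply, smul_eq_mul, conjTranspose_kronecker,
    conjTranspose_one, conjTranspose_apply, mul_apply, Fintype.sum_prod_type, kroneckerMap_apply,
    one_apply, ptranspose₁, of_apply, mul_ite, ite_mul, mul_one, mul_zero, zero_mul,
    Finset.sum_ite_eq, Finset.sum_ite_eq', Finset.mem_univ, if_true, Finset.mul_sum, Finset.sum_mul]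
  rw [Finset.sum_comm]
  refine Finset.sum_congr rfl fun i _ => Finset.sum_congr rfl fun j _ => ?_
  ring

/-- A unitary error basis of `ℂ^V`: unitaries, `(dim ℂ^V)²` in number, that are pairwise orthogonal
for the Hilbert–Schmidt inner product. These are the families defining full Bell measurements. -/
structure IsUnitaryErrorBasis (U : ι → Matrix V V ℂ) : Prop where
  mem_unitaryGroup : ∀ a, U a ∈ unitaryGroup V ℂ
  trace_eq_zero : Pairwise fun a b => ((U a)ᴴ * U b).trace = 0
  card_eq : Fintype.card ι = Fintype.card V ^ 2

namespace IsUnitaryErrorBasis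

variable {U : ι → Matrix V V ℂ}

lemma sum_mul_star [Nonempty V] (hU : IsUnitaryErrorBasis U) (v v' i j : V) :
    ∑ a, U a v i * star (U a v' j) = if v = v' ∧ i = j then (Fintype.card V : ℂ) else 0 := by
  classical
  -- The rows of the square matrix `W` are the vectorised unitaries. Orthogonality of the rows
  -- gives orthogonality of the columns, which is the claim.
  let W : Matrix ι (V × V) ℂ := of fun a p => U a p.1 p.2
  have hd : (Fintype.card V : ℂ) ≠ 0 := by simp
  have hrows : W * ((Fintype.card V : ℂ)⁻¹ • Wᴴ) = 1 := by
    ext a b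
    have htr : (W * Wᴴ) a b = ((U b)ᴴ * U a).trace := by
      simp only [W, mul_apply, trace, diag, conjTranspose_apply, of_apply, Fintype.sum_prod_type]
      rw [Finset.sum_comm]
      simp only [mul_comm]
    rw [Matrix.mul_smul, Matrix.smul_apply, htr, one_apply]
    split_ifs with hab
    · subst hab
      simp [← star_eq_conjTranspose, mem_unitaryGroup_iff'.mp (hU.mem_unitaryGroup a), hd]
    · rw [hU.trace_eq_zero (Ne.symm hab), smul_zero]
  have hcols : ((Fintype.card V : ℂ)⁻¹ • Wᴴ) * W = 1 :=
    (mul_eq_one_comm_of_card_eq _ _ _ (by simp [hU.card_eq, sq])).mp hrows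
  calc ∑ a, U a v i * star (U a v' j)
      = Fintype.card V * (((Fintype.card V : ℂ)⁻¹ • Wᴴ) * W) (v', j) (v, i) := by
        rw [Matrix.smul_mul, Matrix.smul_apply, smul_eq_mul, mul_inv_cancel_left₀ hd, mul_apply]
        exact Finset.sum_congr rfl fun a _ => mul_comm _ _
    _ = if v = v' ∧ i = j then (Fintype.card V : ℂ) else 0 := by
        simp [hcols, one_apply, eq_comm]

lemma sum_bellProj [Nonempty V] (hU : IsUnitaryErrorBasis U) : ∑ a, bellProj (U a) = 1 := by
  ext ⟨v, i⟩ ⟨v', j⟩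
  simp only [Matrix.sum_apply, bellProj_apply, ← Finset.mul_sum, hU.sum_mul_star]
  simp [one_apply]

end IsUnitaryErrorBasis

lemma kronecker_one_mem_unitaryGroup {U : Matrix V V ℂ} (hU : U ∈ unitaryGroup V ℂ) :
    U ⊗ₖ (1 : Matrix B B ℂ) ∈ unitaryGroup (V × B) ℂ :=
  kronecker_mem_unitary hU (one_mem _)

lemma trace_bellDecode [Nonempty V] {U : ι → Matrix V V ℂ} (hU : ∀ a, U a ∈ unitaryGroup V ℂ)
    {N : ι → Matrix (V × B) (V × B) ℂ} {r : Matrix B B ℂ}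
    (hN : ∑ a, N a = (1 : Matrix V V ℂ) ⊗ₖ r) : (bellDecode U N).trace = r.trace := by
  have htrace (a : ι) : ((U a ⊗ₖ (1 : Matrix B B ℂ))ᴴ * N a * (U a ⊗ₖ (1 : Matrix B B ℂ))).trace =
      (N a).trace := by
    rw [trace_mul_cycle, ← star_eq_conjTranspose,
      mem_unitaryGroup_iff.mp (kronecker_one_mem_unitaryGroup (hU a)), Matrix.one_mul]
  calc (bellDecode U N).trace
      = (Fintype.card V : ℂ)⁻¹ * (∑ a, N a).trace := by
        simp only [bellDecode, trace_smul, trace_sum, htrace, smul_eq_mul]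
    _ = r.trace := by simp [hN, trace_kronecker]

lemma IsUnitaryErrorBasis.bellDecode_chanOp [Nonempty V] {U : ι → Matrix V V ℂ}
    (hU : IsUnitaryErrorBasis U) (ρ : Matrix (V × B) (V × B) ℂ) :
    bellDecode U (fun a => chanOp (bellProj (U a)) ρ) = ptranspose₁ ρ := by
  have hundo (a : ι) : (U a ⊗ₖ (1 : Matrix B B ℂ))ᴴ * chanOp (bellProj (U a)) ρ *
      (U a ⊗ₖ (1 : Matrix B B ℂ)) = (Fintype.card V : ℂ)⁻¹ • ptranspose₁ ρ := by
    have hone : (U a ⊗ₖ (1 : Matrix B B ℂ))ᴴ * (U a ⊗ₖ (1 : Matrix B B ℂ)) = 1 :=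
      mem_unitaryGroup_iff'.mp (kronecker_one_mem_unitaryGroup (hU.mem_unitaryGroup a))
    rw [chanOp_bellProj, Matrix.mul_smul, Matrix.smul_mul, Matrix.mul_assoc, Matrix.mul_assoc,
      Matrix.mul_assoc, hone, Matrix.mul_one, ← Matrix.mul_assoc, hone, Matrix.one_mul]
  simp only [bellDecode, hundo, Finset.sum_const, Finset.card_univ, hU.card_eq]
  rw [← Nat.cast_smul_eq_nsmul ℂ, smul_smul, smul_smul]
  convert one_smul ℂ (ptranspose₁ ρ)
  push_cast
  field_simp

end UnitaryErrorBasis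

section HeisenbergWeyl

variable {d : ℕ}

lemma bellPOVM_eq_bellProj (d : ℕ) (a : Fin d × Fin d) : bellPOVM d a = bellProj (HW d a) := by
  ext ⟨v, i⟩ ⟨v', j⟩
  simp only [bellPOVM, bellProj_apply, Fintype.card_fin, maxEnt, conjTranspose_apply, mul_apply,
    Fintype.sum_prod_type, kroneckerMap_apply, of_apply, one_apply, ite_and, mul_ite, ite_mul,
    mul_one, mul_zero, zero_mul, Finset.sum_ite_irrel, Finset.sum_const_zero, Finset.sum_ite_eq,
    Finset.sum_ite_eq', Finset.mem_univ, if_true]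
  ring

/-- The primitive root of unity `exp (2πi / d)` generating the phases of the clock matrix. -/
noncomputable def clockRoot (d : ℕ) : ℂ := Complex.exp (2 * Real.pi * Complex.I / d)

lemma isPrimitiveRoot_clockRoot [NeZero d] : IsPrimitiveRoot (clockRoot d) d :=
  Complex.isPrimitiveRoot_exp d (NeZero.ne d)

lemma star_clockRoot [NeZero d] : star (clockRoot d) = (clockRoot d)⁻¹ :=
  (Complex.inv_eq_conj (isPrimitiveRoot_clockRoot.norm'_eq_one (NeZero.ne d))).symm

lemma clockZ_eq_diagonal (d : ℕ) : clockZ d = diagonal fun i : Fin d => clockRoot d ^ (i : ℕ) := by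
  ext i j
  simp only [clockZ, clockRoot, of_apply, diagonal_apply, ← Complex.exp_nat_mul]
  congr 2
  ring

lemma shiftX_pow_apply [NeZero d] (p : ℕ) (i j : Fin d) :
    (shiftX d ^ p) i j = if (i : ℕ) = (j + p) % d then 1 else 0 := by
  induction p generalizing j with
  | zero => simp [one_apply, Fin.ext_iff, Nat.mod_eq_of_lt j.isLt]
  | succ p ih =>
    have hshift (k : Fin d) : shiftX d k j = if k = j + 1 then 1 else 0 := by
      simp [shiftX, Fin.ext_iff, Fin.val_add]
    simp [pow_succ, mul_apply, hshift, ih, Fin.val_add, add_comm, add_left_comm]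

lemma HW_apply [NeZero d] (a : Fin d × Fin d) (i j : Fin d) :
    HW d a i j = if i = j + a.1 then clockRoot d ^ (j * a.2 : ℕ) else 0 := by
  simp [HW, clockZ_eq_diagonal, diagonal_pow, shiftX_pow_apply, Fin.ext_iff, Fin.val_add, pow_mul]

lemma HW_conjTranspose_mul_apply [NeZero d] (a b : Fin d × Fin d) (i j : Fin d) :
    ((HW d a)ᴴ * HW d b) i j =
      if j + b.1 = i + a.1 then (clockRoot d)⁻¹ ^ (i * a.2 : ℕ) * clockRoot d ^ (j * b.2 : ℕ)
      else 0 := by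
  simp [mul_apply, HW_apply, apply_ite star, star_clockRoot]

lemma HW_mem_unitaryGroup [NeZero d] (a : Fin d × Fin d) : HW d a ∈ unitaryGroup (Fin d) ℂ := by
  rw [mem_unitaryGroup_iff', star_eq_conjTranspose]
  ext i j
  have hζ : clockRoot d ≠ 0 := isPrimitiveRoot_clockRoot.ne_zero (NeZero.ne d)
  simp only [HW_conjTranspose_mul_apply, one_apply, add_left_inj, eq_comm (a := j)]
  split_ifs with hij
  · simp [hij, hζ]
  · rfl

lemma trace_HW_conjTranspose_mul_eq_zero [NeZero d] {a b : Fin d × Fin d} (hab : a ≠ b) :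
    ((HW d a)ᴴ * HW d b).trace = 0 := by
  simp only [trace, diag, HW_conjTranspose_mul_apply, add_right_inj]
  split_ifs with hshift
  · have hclock : a.2 ≠ b.2 := fun h => hab (Prod.ext hshift.symm h)
    have hζ : IsPrimitiveRoot (clockRoot d) d := isPrimitiveRoot_clockRoot
    have hζ0 : clockRoot d ≠ 0 := hζ.ne_zero (NeZero.ne d)
    let η : ℂ := (clockRoot d)⁻¹ ^ (a.2 : ℕ) * clockRoot d ^ (b.2 : ℕ)
    have hη : η ^ d = 1 := by
      simp [η, mul_pow, pow_right_comm _ _ d, hζ.pow_eq_one]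
    have hη1 : η ≠ 1 := by
      intro h
      have hpow : clockRoot d ^ (b.2 : ℕ) = clockRoot d ^ (a.2 : ℕ) := by
        simpa [η, inv_mul_eq_one₀ (pow_ne_zero _ hζ0), eq_comm] using h
      exact hclock (Fin.ext (hζ.pow_inj b.2.isLt a.2.isLt hpow)).symm
    calc ∑ i : Fin d, (clockRoot d)⁻¹ ^ (i * a.2 : ℕ) * clockRoot d ^ (i * b.2 : ℕ)
        = ∑ i ∈ Finset.range d, η ^ i := by
          rw [← Fin.sum_univ_eq_sum_range]
          simp only [η, mul_pow, ← pow_mul, mul_comm]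
      _ = 0 := by simp [geom_sum_eq hη1, hη]
  · exact Finset.sum_const_zero

lemma isUnitaryErrorBasis_HW (d : ℕ) [NeZero d] : IsUnitaryErrorBasis (HW d) where
  mem_unitaryGroup := HW_mem_unitaryGroup
  trace_eq_zero _ _ := trace_HW_conjTranspose_mul_eq_zero
  card_eq := by simp [sq]

end HeisenbergWeyl

section NegativityEstimation

variable {ι V A B X : Type*} [Fintype ι] [Fintype V] [Fintype A] [Fintype B] [DecidableEq V]
  [DecidableEq B]

/-- The objective values attained in the negativity-estimation optimization for inputs `ω` and
assemblage `σ`, whose infimum is the estimate `ν`. -/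
def negativityEstimates (ω : X → Matrix V V ℂ) (σ : ι → X → Matrix B B ℂ) : Set ℝ :=
  {t | ∃ (Mp Mm : ι → Matrix (V × B) (V × B) ℂ) (ρp ρm : Matrix B B ℂ),
    (∀ a, (Mp a).PosSemidef) ∧ (∀ a, (Mm a).PosSemidef) ∧ ρp.IsHermitian ∧ ρm.IsHermitian ∧
    (∀ a x, σ a x = ptrace₁ (Mp a * (ω x ⊗ₖ (1 : Matrix B B ℂ))) -
      ptrace₁ (Mm a * (ω x ⊗ₖ (1 : Matrix B B ℂ)))) ∧
    (∑ a, Mp a) = (1 : Matrix V V ℂ) ⊗ₖ ρp ∧ (∑ a, Mm a) = (1 : Matrix V V ℂ) ⊗ₖ ρm ∧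
    t = (ρm.trace).re}

/-- The values `tr ρ₋` over the decompositions `ρ = ρ₊ - ρ₋` with `ρ₊`, `ρ₋` of positive partial
transpose, whose infimum is the negativity of `ρ`. -/
def pptDecompositionValues (ρ : Matrix (A × B) (A × B) ℂ) : Set ℝ :=
  {t | ∃ ρp ρm : Matrix (A × B) (A × B) ℂ, ρ = ρp - ρm ∧ (ptranspose₁ ρp).PosSemidef ∧
    (ptranspose₁ ρm).PosSemidef ∧ t = (ρm.trace).re}

theorem pptDecompositionValues_subset_negativityEstimates [DecidableEq A]
    {M : ι → Matrix (V × A) (V × A) ℂ} (hM : ∀ a, (M a).PosSemidef) (hM1 : ∑ a, M a = 1)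
    (ρ : Matrix (A × B) (A × B) ℂ) (ω : X → Matrix V V ℂ) :
    pptDecompositionValues ρ ⊆ negativityEstimates ω fun a x => teleA (M a) ρ (ω x) := by
  rintro _ ⟨ρp, ρm, rfl, hp, hm, rfl⟩
  have hsum (R : Matrix (A × B) (A × B) ℂ) :
      ∑ a, chanOp (M a) R = (1 : Matrix V V ℂ) ⊗ₖ ptrace₁ R := by
    rw [sum_chanOp, hM1, chanOp_one]
  have hherm {R : Matrix (A × B) (A × B) ℂ} (hR : (ptranspose₁ R).PosSemidef) :
      (ptrace₁ R).IsHermitian :=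
    ptrace₁_ptranspose₁ R ▸ isHermitian_ptrace₁ hR.isHermitian
  refine ⟨fun a => chanOp (M a) ρp, fun a => chanOp (M a) ρm, ptrace₁ ρp, ptrace₁ ρm,
    fun a => posSemidef_chanOp (hM a) hp, fun a => posSemidef_chanOp (hM a) hm,
    hherm hp, hherm hm, fun a x => ?_, hsum ρp, hsum ρm, by rw [trace_ptrace₁]⟩
  simp only [teleA_eq_ptrace₁_chanOp, chanOp_sub, Matrix.sub_mul, ptrace₁_sub]

theorem IsUnitaryErrorBasis.negativityEstimates_subset_pptDecompositionValues [Nonempty V]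
    {U : ι → Matrix V V ℂ} (hU : IsUnitaryErrorBasis U) (ρ : Matrix (V × B) (V × B) ℂ)
    {ω : X → Matrix V V ℂ} (hω : Submodule.span ℂ (Set.range ω) = ⊤) :
    (negativityEstimates ω fun a x => teleA (bellProj (U a)) ρ (ω x)) ⊆
      pptDecompositionValues ρ := by
  rintro _ ⟨Mp, Mm, ρp, ρm, hMp, hMm, -, -, hσ, -, hsum, rfl⟩
  simp only [teleA_eq_ptrace₁_chanOp] at hσ
  have hchan : (fun a => chanOp (bellProj (U a)) ρ) = Mp - Mm := by
    funext a
    refine eq_of_ptrace₁_mul_kronecker_eq hω fun x => ?_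
    rw [hσ, Pi.sub_apply, Matrix.sub_mul, ptrace₁_sub]
  have hdecode : ptranspose₁ ρ = bellDecode U Mp - bellDecode U Mm := by
    rw [← hU.bellDecode_chanOp, hchan, bellDecode_sub]
  refine ⟨ptranspose₁ (bellDecode U Mp), ptranspose₁ (bellDecode U Mm), ?_,
    posSemidef_bellDecode U hMp, posSemidef_bellDecode U hMm, ?_⟩
  · rw [← ptranspose₁_sub, ← hdecode, ptranspose₁_ptranspose₁]
  · rw [trace_ptranspose₁, trace_bellDecode hU.mem_unitaryGroup hsum]

theorem negativity_lower_bound_tight_general [Nonempty V] {U : ι → Matrix V V ℂ}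
    (hU : IsUnitaryErrorBasis U) (ρ : Matrix (V × B) (V × B) ℂ) {ω : X → Matrix V V ℂ}
    (hω : Submodule.span ℂ (Set.range ω) = ⊤) :
    (negativityEstimates ω fun a x => teleA (bellProj (U a)) ρ (ω x)) =
      pptDecompositionValues ρ :=
  (hU.negativityEstimates_subset_pptDecompositionValues ρ hω).antisymm
    (pptDecompositionValues_subset_negativityEstimates (fun a => posSemidef_bellProj (U a))
      hU.sum_bellProj ρ ω)

end NegativityEstimation

/-- for a full Bell state measurement and a tomographically complete set of
inputs, the negativity-estimation SDP value equals the entanglement negativity. -/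
theorem negativity_lower_bound_tight {B X : Type*} [Fintype B] [DecidableEq B]
    (d : ℕ) (hd : 1 ≤ d)
    (ρ : Matrix (Fin d × B) (Fin d × B) ℂ) (hρ : IsState ρ)
    (ω : X → Matrix (Fin d) (Fin d) ℂ) (hω : ∀ x, IsState (ω x))
    (htomo : TomoComplete ω) :
    sInf {t : ℝ | ∃ (Mp Mm : Fin d × Fin d → Matrix (Fin d × B) (Fin d × B) ℂ)
        (ρp ρm : Matrix B B ℂ),
        (∀ a, (Mp a).PosSemidef) ∧ (∀ a, (Mm a).PosSemidef) ∧
        ρp.IsHermitian ∧ ρm.IsHermitian ∧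
        (∀ a x, teleA (bellPOVM d a) ρ (ω x) =
          ptrace₁ (Mp a * (ω x ⊗ₖ (1 : Matrix B B ℂ))) -
            ptrace₁ (Mm a * (ω x ⊗ₖ (1 : Matrix B B ℂ)))) ∧
        (∑ a, Mp a) = (1 : Matrix (Fin d) (Fin d) ℂ) ⊗ₖ ρp ∧
        (∑ a, Mm a) = (1 : Matrix (Fin d) (Fin d) ℂ) ⊗ₖ ρm ∧
        t = (ρm.trace).re} = negativity ρ := by
  have : NeZero d := ⟨by omega⟩
  simp_rw [bellPOVM_eq_bellProj]
  exact congrArg sInf (negativity_lower_bound_tight_general (isUnitaryErrorBasis_HW d) ρ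
    htomo.span_complex_eq_top)

end Tele
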